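/- Fix an integer M ≥ 1, T > 0, ε > 0, c ≥ 0 and p₀ ∈ [0,1). Suppose φ^{n,k;m,ℓ} : [0,T] → ℝ is a family of continuously differentiable functions, indexed by integers n ≥ 1, 1 ≤ k ≤ M^{n−1}, m ≥ n and M^{m−n}(k−1)+1 ≤ ℓ ≤ M^{m−n}k, satisfying: (i) (φ^{n,k;n,k})'(t) = φ^{n,k;n,k}(t)² − ε(1−p₀) with φ^{n,k;n,k}(T) = c(1−p₀); (ii) for M(k−1)+1 ≤ ℓ ≤ Mk, (φ^{n,k;n+1,ℓ})'(t) = φ^{n,k;n,k}(t)·φ^{n,k;n+1,ℓ}(t) + φ^{n,k;n+1,ℓ}(t)·φ^{n+1,ℓ;n+1,ℓ}(t) + ε(1−p₀)/M with φ^{n,k;n+1,ℓ}(T) = −c(1−p₀)/M; (iii) for m ≥ n+2 and M^{m−n}(k−1)+1 ≤ ℓ ≤ M^{m−n}k, (φ^{n,k;m,ℓ})'(t) = ∑_{i=n}^{m} φ^{n,k;i,⌈ℓ/M^{m−i}⌉}(t)·φ^{i,⌈ℓ/M^{m−i}⌉;m,ℓ}(t) with φ^{n,k;m,ℓ}(T)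 = 0, where ⌈x⌉ is the least integer ≥ x. Then such a family exists, and any such family is depth-invariant: φ^{n,k;m,ℓ}(t) = φ^{n',k';m',ℓ'}(t) for all t ∈ [0,T] whenever m − n = m' − n' (for all admissible indices). -/

import Mathlib

/-!
The right-hand side of the system only couples depths: writing `d = m - n`, a family of the form
`φ^{n,k;m,ℓ} = ψ_{m-n}` solves the tree system as soon as

* `ψ₀' = ψ₀² - ε(1-p₀)`, `ψ₀(T) = c(1-p₀)`,
* `ψ₁' = 2ψ₀ψ₁ + ε(1-p₀)/M`, `ψ₁(T) = -c(1-p₀)/M`,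
* `ψ_d' = ∑_{j=0}^d ψ_j ψ_{d-j}`, `ψ_d(T) = 0` for `d ≥ 2`.

This triangular system is solvable on all of `[0,T]`.  The Riccati equation is linearised by
`ψ₀ = -u'/u` with `u'' = ε(1-p₀) u`, `u(T) = 1`, `u'(T) = -c(1-p₀)`; `u` is an explicit combination
of hyperbolic functions which is positive for `t ≤ T` because `c(1-p₀) ≥ 0`.  Each later equation is
linear, `ψ_d' = 2ψ₀ψ_d + (terms of lower depth)`, and has integrating factor `u²`
(`hasDerivWithinAt_linSol`).

Conversely, every solution `φ` of the tree system agrees with `ψ_{m-n}`, by strong induction on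
`m - n`.  The intermediate indices `(n,k;i,⌈ℓ/M^{m-i}⌉)` and `(i,⌈ℓ/M^{m-i}⌉;m,ℓ)` are admissible
(`Admissible.split`), so the inner terms of the sum are known by induction, and the difference
`w = φ - ψ` satisfies a homogeneous linear equation `w' = h w` with `w(T) = 0`
(`eqOn_of_sub_linear`).  For depth zero, `h = φ + ψ₀`.
-/


open Real

/-- Admissibility of the index quadruple `(n,k,m,ℓ)` for the random directed tree
with branching number `M`: `n ≥ 1`, `1 ≤ k ≤ M^{n−1}`, `m ≥ n` and
`M^{m−n}(k−1)+1 ≤ ℓ ≤ M^{m−n}k`. -/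
def Admissible (M n k m ℓ : ℕ) : Prop :=
  1 ≤ n ∧ 1 ≤ k ∧ k ≤ M ^ (n - 1) ∧ n ≤ m ∧
  M ^ (m - n) * (k - 1) + 1 ≤ ℓ ∧ ℓ ≤ M ^ (m - n) * k

/-- The Riccati system of the random directed tree game: conditions (i)–(iii) for the
family `φ^{n,k;m,ℓ}` on `[0,T]`.  Here `(ℓ + M^{m−i} − 1) / M^{m−i}` is the natural
number ceiling `⌈ℓ / M^{m−i}⌉`. -/
def TreeRiccati (M : ℕ) (T ε c p₀ : ℝ) (φ : ℕ → ℕ → ℕ → ℕ → ℝ → ℝ) : Prop :=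
  (∀ n k m ℓ, Admissible M n k m ℓ → ContDiffOn ℝ 1 (φ n k m ℓ) (Set.Icc 0 T)) ∧
  -- (i)
  (∀ n k, Admissible M n k n k →
    (∀ t ∈ Set.Icc (0:ℝ) T, HasDerivWithinAt (φ n k n k)
      ((φ n k n k t) ^ 2 - ε * (1 - p₀)) (Set.Icc 0 T) t) ∧
    φ n k n k T = c * (1 - p₀)) ∧
  -- (ii)
  (∀ n k ℓ, Admissible M n k (n + 1) ℓ →
    (∀ t ∈ Set.Icc (0:ℝ) T, HasDerivWithinAt (φ n k (n + 1) ℓ)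
      (φ n k n k t * φ n k (n + 1) ℓ t + φ n k (n + 1) ℓ t * φ (n + 1) ℓ (n + 1) ℓ t +
        ε * (1 - p₀) / M) (Set.Icc 0 T) t) ∧
    φ n k (n + 1) ℓ T = -(c * (1 - p₀) / M)) ∧
  -- (iii)
  (∀ n k m ℓ, n + 2 ≤ m → Admissible M n k m ℓ →
    (∀ t ∈ Set.Icc (0:ℝ) T, HasDerivWithinAt (φ n k m ℓ)
      (∑ i ∈ Finset.Icc n m,
        φ n k i ((ℓ + M ^ (m - i) - 1) / M ^ (m - i)) t *
          φ i ((ℓ + M ^ (m - i) - 1) / M ^ (m - i)) m ℓ t) (Set.Icc 0 T) t) ∧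
    φ n k m ℓ T = 0)

/-! ### Scalar linear equations on an interval -/

/-- Two functions whose difference solves a homogeneous linear equation `w' = h w` with continuous
coefficient, and which agree at the right end point, agree on the whole interval. -/
theorem eqOn_of_sub_linear {T : ℝ} {f g f' g' h : ℝ → ℝ} (hh : ContinuousOn h (Set.Icc 0 T))
    (hf : ∀ t ∈ Set.Icc (0:ℝ) T, HasDerivWithinAt f (f' t) (Set.Icc 0 T) t)
    (hg : ∀ t ∈ Set.Icc (0:ℝ) T, HasDerivWithinAt g (g' t) (Set.Icc 0 T) t)
    (hfg : ∀ t ∈ Set.Icc (0:ℝ) T, f' t - g' t = h t * (f t - g t))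
    (hT : f T = g T) : ∀ t ∈ Set.Icc (0:ℝ) T, f t = g t := by
  obtain ⟨C, hC⟩ := isCompact_Icc.exists_bound_of_continuousOn hh
  have hw : ∀ t ∈ Set.Icc (0:ℝ) T,
      HasDerivWithinAt (fun s => f s - g s) (h t * (f t - g t)) (Set.Icc 0 T) t := by
    intro t ht
    rw [← hfg t ht]
    exact (hf t ht).fun_sub (hg t ht)
  have key : Set.EqOn (fun s => f s - g s) (fun _ => 0) (Set.Icc 0 T) := by
    refine ODE_solution_unique_of_mem_Icc_left (v := fun t y => h t * y) (K := C.toNNReal)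
      (s := fun _ => Set.univ) ?_ ?_ ?_ (fun _ _ => Set.mem_univ _) continuousOn_const ?_
      (fun _ _ => Set.mem_univ _) (by simp [hT])
    · intro t ht
      refine (LipschitzWith.of_dist_le_mul fun x y => ?_).lipschitzOnWith
      rw [Real.dist_eq, Real.dist_eq, ← mul_sub, abs_mul]
      exact mul_le_mul_of_nonneg_right
        ((hC t (Set.Ioc_subset_Icc_self ht)).trans (Real.le_coe_toNNReal C)) (abs_nonneg _)
    · exact fun t ht => (hw t ht).continuousWithinAt
    · intro t ht
      exact (hw t (Set.Ioc_subset_Icc_self ht)).mono_of_mem_nhdsWithin (Icc_mem_nhdsLE_of_mem ht)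
    · intro t ht
      simpa using hasDerivWithinAt_const (x := t) (s := Set.Iic t) (c := (0:ℝ))
  intro t ht
  exact sub_eq_zero.1 (key ht)

/-- The solution of `y' = -2 (u'/u) y + g`, `y(T) = b`, when `u(T) = 1`, written with the integrating
factor `u²`. -/
noncomputable def linSol (u : ℝ → ℝ) (T : ℝ) (g : ℝ → ℝ) (b : ℝ) (t : ℝ) : ℝ :=
  (b - ∫ s in t..T, u s ^ 2 * g s) / u t ^ 2

theorem hasDerivWithinAt_linSol {u v g : ℝ → ℝ} {T : ℝ} (b : ℝ)
    (hu : ∀ t, HasDerivAt u (v t) t) (hpos : ∀ t ∈ Set.Icc (0:ℝ) T, 0 < u t)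
    (hg : ContinuousOn g (Set.Icc 0 T)) :
    ∀ t ∈ Set.Icc (0:ℝ) T, HasDerivWithinAt (linSol u T g b)
      (2 * (-v t / u t) * linSol u T g b t + g t) (Set.Icc 0 T) t := by
  intro t ht
  have huc : Continuous u := continuous_iff_continuousAt.2 fun t => (hu t).continuousAt
  have hc : ContinuousOn (fun s => u s ^ 2 * g s) (Set.Icc 0 T) :=
    (huc.pow 2).continuousOn.mul hg
  have : Fact (t ∈ Set.Icc (0:ℝ) T) := ⟨ht⟩
  have hint : HasDerivWithinAt (fun x => ∫ s in x..T, u s ^ 2 * g s) (-(u t ^ 2 * g t))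
      (Set.Icc 0 T) t := by
    refine intervalIntegral.integral_hasDerivWithinAt_left (t := Set.Icc 0 T) ?_
      (hc.stronglyMeasurableAtFilter_nhdsWithin measurableSet_Icc t) (hc t ht)
    apply ContinuousOn.intervalIntegrable
    rw [Set.uIcc_of_le ht.2]
    exact hc.mono (Set.Icc_subset_Icc_left ht.1)
  have hne := (hpos t ht).ne'
  have := (hint.const_sub b).fun_div ((hu t).hasDerivWithinAt.fun_pow 2) (pow_ne_zero 2 hne)
  refine this.congr_deriv ?_
  simp only [linSol]
  field_simp
  push_cast
  ring

/-! ### The depth sequence -/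

/-- The depth-`d` component `ψ_d` of the invariant solution, built from the linearising function `u`
and its derivative `v`; `α` and `β` are the source and terminal value of the depth-one equation. -/
noncomputable def depthSeq (u v : ℝ → ℝ) (T α β : ℝ) : ℕ → ℝ → ℝ
  | 0 => fun t => -v t / u t
  | 1 => linSol u T (fun _ => α) β
  | n + 2 => linSol u T (fun t => ∑ j : Fin (n + 1),
      depthSeq u v T α β (j + 1) t * depthSeq u v T α β (n + 1 - j) t) 0

/-- The scalar triangular system satisfied by the components `ψ_d` of a depth-invariant solution.
In the last clause the two extreme terms of `∑_{j=0}^d ψ_j ψ_{d-j}` have been isolated. -/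
structure DepthRiccati (T a b α β : ℝ) (ψ : ℕ → ℝ → ℝ) : Prop where
  deriv_zero : ∀ t ∈ Set.Icc (0:ℝ) T, HasDerivWithinAt (ψ 0) (ψ 0 t ^ 2 - a) (Set.Icc 0 T) t
  zero_T : ψ 0 T = b
  deriv_one : ∀ t ∈ Set.Icc (0:ℝ) T,
    HasDerivWithinAt (ψ 1) (2 * ψ 0 t * ψ 1 t + α) (Set.Icc 0 T) t
  one_T : ψ 1 T = β
  deriv_add_two : ∀ n, ∀ t ∈ Set.Icc (0:ℝ) T, HasDerivWithinAt (ψ (n + 2))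
    (2 * ψ 0 t * ψ (n + 2) t + ∑ j ∈ Finset.range (n + 1), ψ (j + 1) t * ψ (n + 1 - j) t)
    (Set.Icc 0 T) t
  add_two_T : ∀ n, ψ (n + 2) T = 0

theorem DepthRiccati.continuousOn {T a b α β : ℝ} {ψ : ℕ → ℝ → ℝ}
    (h : DepthRiccati T a b α β ψ) : ∀ d, ContinuousOn (ψ d) (Set.Icc 0 T)
  | 0 => fun t ht => (h.deriv_zero t ht).continuousWithinAt
  | 1 => fun t ht => (h.deriv_one t ht).continuousWithinAt
  | n + 2 => fun t ht => (h.deriv_add_two n t ht).continuousWithinAt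

theorem depthRiccati_depthSeq {u v : ℝ → ℝ} {T a b : ℝ} (α β : ℝ)
    (hu : ∀ t, HasDerivAt u (v t) t) (hv : ∀ t, HasDerivAt v (a * u t) t)
    (hpos : ∀ t ∈ Set.Icc (0:ℝ) T, 0 < u t) (huT : u T = 1) (hvT : v T = -b) :
    DepthRiccati T a b α β (depthSeq u v T α β) := by
  have h0 : ∀ t ∈ Set.Icc (0:ℝ) T, HasDerivWithinAt (depthSeq u v T α β 0)
      (depthSeq u v T α β 0 t ^ 2 - a) (Set.Icc 0 T) t := by
    intro t ht
    have hne := (hpos t ht).ne'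
    rw [depthSeq]
    refine ((hv t).fun_neg.fun_div (hu t) hne).hasDerivWithinAt.congr_deriv ?_
    field_simp
    ring
  have h1 : ∀ t ∈ Set.Icc (0:ℝ) T, HasDerivWithinAt (depthSeq u v T α β 1)
      (2 * depthSeq u v T α β 0 t * depthSeq u v T α β 1 t + α) (Set.Icc 0 T) t := by
    rw [depthSeq, depthSeq]
    exact hasDerivWithinAt_linSol β hu hpos continuousOn_const
  have hcont : ∀ d, ContinuousOn (depthSeq u v T α β d) (Set.Icc 0 T) := by
    intro d
    induction d using Nat.strong_induction_on with
    | _ d ih =>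
      match d, ih with
      | 0, _ => exact fun t ht => (h0 t ht).continuousWithinAt
      | 1, _ => exact fun t ht => (h1 t ht).continuousWithinAt
      | n + 2, ih =>
        rw [depthSeq]
        refine fun t ht => (hasDerivWithinAt_linSol 0 hu hpos ?_ t ht).continuousWithinAt
        exact continuousOn_finsetSum _ fun j _ =>
          (ih (j + 1) (by omega)).mul (ih (n + 1 - j) (by omega))
  refine ⟨h0, by simp [depthSeq, huT, hvT], h1, by simp [depthSeq, linSol, huT], fun n => ?_,
    fun n => by rw [depthSeq]; simp [linSol]⟩
  have := hasDerivWithinAt_linSol (u := u) (v := v) (T := T) (g := fun t => ∑ j : Fin (n + 1),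
      depthSeq u v T α β (j + 1) t * depthSeq u v T α β (n + 1 - j) t) 0 hu hpos
      (continuousOn_finsetSum _ fun j _ => (hcont (j + 1)).mul (hcont (n + 1 - j)))
  intro t ht
  rw [Finset.sum_range fun j => depthSeq u v T α β (j + 1) t * depthSeq u v T α β (n + 1 - j) t]
  have := this t ht
  rw [depthSeq.eq_3, depthSeq.eq_1]
  exact this

theorem exists_depthRiccati (T a b α β : ℝ) (ha : 0 < a) (hb : 0 ≤ b) :
    ∃ ψ, DepthRiccati T a b α β ψ := by
  have hr : 0 < √a := Real.sqrt_pos.2 ha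
  have hrr : √a ^ 2 = a := Real.sq_sqrt ha.le
  have hlin : ∀ t : ℝ, HasDerivAt (fun t => √a * (T - t)) (-√a) t := fun t => by
    simpa using ((hasDerivAt_id t).const_sub T).const_mul √a
  -- `u'' = a u` with `u(T) = 1` and `u'(T) = -b`
  refine ⟨_, depthRiccati_depthSeq (b := b)
    (u := fun t => cosh (√a * (T - t)) + b / √a * sinh (√a * (T - t)))
    (v := fun t => -(√a * sinh (√a * (T - t)) + b * cosh (√a * (T - t)))) α β ?_ ?_ ?_ ?_ ?_⟩
  · intro t
    refine ((hlin t).cosh.fun_add ((hlin t).sinh.const_mul (b / √a))).congr_deriv ?_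
    field_simp
    ring
  · intro t
    refine (((hlin t).sinh.const_mul √a).fun_add
      ((hlin t).cosh.const_mul b)).fun_neg.congr_deriv ?_
    field_simp
    rw [← hrr, Real.sqrt_sq hr.le]
    ring
  · intro t ht
    have : 0 ≤ sinh (√a * (T - t)) :=
      Real.sinh_nonneg_iff.2 (mul_nonneg hr.le (sub_nonneg.2 ht.2))
    have := Real.cosh_pos (√a * (T - t))
    positivity
  · simp
  · simp

/-! ### Indices -/

/-- The generation-`i` ancestor `(i, ⌈ℓ/M^{m-i}⌉)` of `(m,ℓ)` lies below `(n,k)` and above `(m,ℓ)`. -/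
theorem Admissible.split {M n k m ℓ i : ℕ} (hM : 1 ≤ M) (h : Admissible M n k m ℓ)
    (hni : n ≤ i) (him : i ≤ m) :
    Admissible M n k i ((ℓ + M ^ (m - i) - 1) / M ^ (m - i)) ∧
      Admissible M i ((ℓ + M ^ (m - i) - 1) / M ^ (m - i)) m ℓ := by
  obtain ⟨hn, hk, hkn, hnm, hl, hu⟩ := h
  have hP : 0 < M ^ (m - i) := by positivity
  have e1 : M ^ (m - n) = M ^ (m - i) * M ^ (i - n) := by
    rw [← pow_add]; congr 1; omega
  have e2 : M ^ (i - 1) = M ^ (i - n) * M ^ (n - 1) := by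
    rw [← pow_add]; congr 1; omega
  rw [e1, mul_assoc] at hl hu
  simp only [Admissible]
  generalize M ^ (m - i) = P at *
  generalize M ^ (i - n) = Q at *
  obtain ⟨c, hc⟩ : ∃ c, c = (ℓ + P - 1) / P := ⟨_, rfl⟩
  have hlo : Q * (k - 1) + 1 ≤ c := by
    rw [hc, Nat.le_div_iff_mul_le hP]
    have : (Q * (k - 1) + 1) * P = P * (Q * (k - 1)) + P := by ring
    omega
  have hhi : c ≤ Q * k := by
    rw [hc]
    refine Nat.lt_succ_iff.1 ((Nat.div_lt_iff_lt_mul hP).2 ?_)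
    have : (Q * k).succ * P = P * (Q * k) + P := by rw [Nat.succ_eq_add_one]; ring
    omega
  have hd1 : c * P ≤ ℓ + P - 1 := by rw [hc]; exact Nat.div_mul_le_self _ _
  have hd2 : ℓ + P - 1 < P * (c + 1) := by rw [hc]; exact Nat.lt_mul_div_succ _ hP
  have hc1 : 1 ≤ c := by omega
  have hPc : P * (c - 1) + P = c * P := by
    obtain ⟨e, rfl⟩ := Nat.exists_eq_add_of_le' hc1
    simp; ring
  have hPc' : P * (c + 1) = P * c + P := by ring
  rw [← hc]
  refine ⟨⟨hn, hk, hkn, hni, hlo, hhi⟩, ⟨by omega, hc1, ?_, him, by omega, by omega⟩⟩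
  rw [e2]
  exact hhi.trans (Nat.mul_le_mul_left _ hkn)

theorem Admissible.eq_of_self {M n k ℓ : ℕ} (h : Admissible M n k n ℓ) : ℓ = k := by
  obtain ⟨_, hk, _, _, hl, hu⟩ := h
  simp at hl hu
  omega

/-- The sum over `n ≤ i ≤ m` with its two extreme terms isolated. -/
theorem sum_Icc_ends (f : ℕ → ℝ) (n e : ℕ) :
    ∑ i ∈ Finset.Icc n (n + (e + 2)), f i =
      f n + f (n + (e + 2)) + ∑ j ∈ Finset.range (e + 1), f (n + (j + 1)) := by
  have : Finset.Icc n (n + (e + 2)) = Finset.Ico n (n + (e + 2) + 1) := by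
    ext i
    simp only [Finset.mem_Icc, Finset.mem_Ico]
    omega
  rw [this, Finset.sum_Ico_eq_sum_range, show n + (e + 2) + 1 - n = e + 2 + 1 by omega,
    Finset.sum_range_succ, Finset.sum_range_succ']
  simp only [add_zero]
  ring

/-! ### The tree system -/

theorem treeRiccati_of_depthRiccati {M : ℕ} {T ε c p₀ : ℝ} {ψ : ℕ → ℝ → ℝ} (hT : 0 < T)
    (h : DepthRiccati T (ε * (1 - p₀)) (c * (1 - p₀)) (ε * (1 - p₀) / M) (-(c * (1 - p₀) / M)) ψ) :
    TreeRiccati M T ε c p₀ fun n _ m _ => ψ (m - n) := by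
  refine ⟨?_, ?_, ?_, ?_⟩
  · have hC1 : ∀ {f f' : ℝ → ℝ}, ContinuousOn f' (Set.Icc 0 T) →
        (∀ t ∈ Set.Icc (0:ℝ) T, HasDerivWithinAt f (f' t) (Set.Icc 0 T) t) →
        ContDiffOn ℝ 1 f (Set.Icc 0 T) := by
      intro f f' hf' hf
      have hud := uniqueDiffOn_Icc hT
      rw [contDiffOn_one_iff_derivWithin hud]
      exact ⟨fun t ht => (hf t ht).differentiableWithinAt,
        hf'.congr fun t ht => (hf t ht).derivWithin (hud t ht)⟩
    have hc := h.continuousOn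
    intro n _ m _ _
    beta_reduce
    generalize m - n = d
    match d with
    | 0 =>
      exact hC1 (f' := fun t => ψ 0 t ^ 2 - ε * (1 - p₀))
        (((hc 0).pow 2).sub continuousOn_const) h.deriv_zero
    | 1 =>
      exact hC1 (f' := fun t => 2 * ψ 0 t * ψ 1 t + ε * (1 - p₀) / M)
        (((continuousOn_const.mul (hc 0)).mul (hc 1)).add continuousOn_const) h.deriv_one
    | d + 2 =>
      exact hC1 (f' := fun t => 2 * ψ 0 t * ψ (d + 2) t +
          ∑ j ∈ Finset.range (d + 1), ψ (j + 1) t * ψ (d + 1 - j) t)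
        (((continuousOn_const.mul (hc 0)).mul (hc (d + 2))).add
          (continuousOn_finsetSum _ fun j _ => (hc (j + 1)).mul (hc (d + 1 - j))))
        (h.deriv_add_two d)
  · intro n k _
    simp only [Nat.sub_self]
    exact ⟨h.deriv_zero, h.zero_T⟩
  · intro n k ℓ _
    simp only [Nat.sub_self, Nat.add_sub_cancel_left]
    refine ⟨fun t ht => (h.deriv_one t ht).congr_deriv (by ring), h.one_T⟩
  · intro n k m ℓ hnm _
    obtain ⟨e, rfl⟩ : ∃ e, m = n + (e + 2) := ⟨m - n - 2, by omega⟩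
    simp only [Nat.add_sub_cancel_left]
    refine ⟨fun t ht => (h.deriv_add_two e t ht).congr_deriv ?_, h.add_two_T e⟩
    rw [sum_Icc_ends fun i => ψ (i - n) t * ψ (n + (e + 2) - i) t]
    simp only [Nat.sub_self, Nat.add_sub_cancel_left]
    have : ∀ j, n + (e + 2) - (n + (j + 1)) = e + 1 - j := fun j => by omega
    simp only [this]
    ring

/-- Every solution of the tree system is given by the depth components `ψ_{m-n}`. -/
theorem TreeRiccati.eq_depth {M : ℕ} {T ε c p₀ : ℝ} {ψ : ℕ → ℝ → ℝ}
    {φ : ℕ → ℕ → ℕ → ℕ → ℝ → ℝ} (hM : 1 ≤ M) (hφ : TreeRiccati M T ε c p₀ φ)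
    (h : DepthRiccati T (ε * (1 - p₀)) (c * (1 - p₀)) (ε * (1 - p₀) / M) (-(c * (1 - p₀) / M)) ψ) :
    ∀ d n k ℓ, Admissible M n k (n + d) ℓ →
      ∀ t ∈ Set.Icc (0:ℝ) T, φ n k (n + d) ℓ t = ψ d t := by
  obtain ⟨hC, hi, hii, hiii⟩ := hφ
  have hc := h.continuousOn
  intro d
  induction d using Nat.strong_induction_on with
  | _ d ih =>
    match d, ih with
    | 0, _ =>
      intro n k ℓ hA
      obtain rfl : ℓ = k := hA.eq_of_self
      obtain ⟨hd, hTv⟩ := hi n ℓ hA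
      exact eqOn_of_sub_linear (h := fun t => φ n ℓ n ℓ t + ψ 0 t)
        ((hC n ℓ n ℓ hA).continuousOn.add (hc 0)) hd h.deriv_zero
        (fun t _ => by simp only [add_zero]; ring) (hTv.trans h.zero_T.symm)
    | 1, ih =>
      intro n k ℓ hA
      obtain ⟨hd, hTv⟩ := hii n k ℓ hA
      have hA1 : Admissible M n k n k := by
        obtain ⟨h1, h2, h3, -⟩ := hA
        exact ⟨h1, h2, h3, le_rfl, by simp; omega, by simp⟩
      have hA2 : Admissible M (n + 1) ℓ (n + 1) ℓ := by
        have := (hA.split hM (Nat.le_succ n) le_rfl).2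
        simpa using this
      refine eqOn_of_sub_linear (h := fun t => 2 * ψ 0 t) (continuousOn_const.mul (hc 0)) hd h.deriv_one (fun t ht => ?_) (hTv.trans h.one_T.symm)
      have e1 := ih 0 one_pos n k k hA1 t ht
      have e2 := ih 0 one_pos (n + 1) ℓ ℓ hA2 t ht
      simp only [add_zero] at e1 e2
      simp only [e1, e2]
      ring
    | e + 2, ih =>
      intro n k ℓ hA
      obtain ⟨hd, hTv⟩ := hiii n k (n + (e + 2)) ℓ (by omega) hA
      refine eqOn_of_sub_linear (h := fun t => 2 * ψ 0 t) (continuousOn_const.mul (hc 0)) hd (h.deriv_add_two e) (fun t ht => ?_)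
        (hTv.trans (h.add_two_T e).symm)
      rw [sum_Icc_ends fun i => φ n k i ((ℓ + M ^ (n + (e + 2) - i) - 1) / M ^ (n + (e + 2) - i)) t *
          φ i ((ℓ + M ^ (n + (e + 2) - i) - 1) / M ^ (n + (e + 2) - i)) (n + (e + 2)) ℓ t]
      -- the ancestor of `(m,ℓ)` in generation `n` is `k`, and in generation `m` it is `ℓ`
      have hs0 := hA.split hM le_rfl (by omega : n ≤ n + (e + 2))
      have hs1 := hA.split hM (by omega : n ≤ n + (e + 2)) le_rfl
      have hk := hs0.1.eq_of_self
      have hl : (ℓ + M ^ (n + (e + 2) - (n + (e + 2))) - 1) / M ^ (n + (e + 2) - (n + (e + 2))) = ℓ :=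
        hs1.2.eq_of_self.symm
      rw [hk] at hs0 ⊢
      rw [hl] at hs1 ⊢
      have e1 := ih 0 (by omega) n k k hs0.1 t ht
      have e2 := ih 0 (by omega) (n + (e + 2)) ℓ ℓ hs1.2 t ht
      simp only [add_zero] at e1 e2
      have e3 : ∀ j ∈ Finset.range (e + 1),
          φ n k (n + (j + 1)) ((ℓ + M ^ (n + (e + 2) - (n + (j + 1))) - 1) /
            M ^ (n + (e + 2) - (n + (j + 1)))) t *
          φ (n + (j + 1)) ((ℓ + M ^ (n + (e + 2) - (n + (j + 1))) - 1) /
            M ^ (n + (e + 2) - (n + (j + 1)))) (n + (e + 2)) ℓ t =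
          ψ (j + 1) t * ψ (e + 1 - j) t := by
        intro j hj
        have hj := Finset.mem_range.1 hj
        obtain ⟨s1, s2⟩ := hA.split hM (by omega : n ≤ n + (j + 1))
          (by omega : n + (j + 1) ≤ n + (e + 2))
        generalize (ℓ + M ^ (n + (e + 2) - (n + (j + 1))) - 1) /
            M ^ (n + (e + 2) - (n + (j + 1))) = q at *
        have em : n + (e + 2) = n + (j + 1) + (e + 1 - j) := by omega
        rw [em] at s2 ⊢
        rw [ih (j + 1) (by omega) n k q s1 t ht, ih (e + 1 - j) (by omega) _ q ℓ s2 t ht]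
      rw [Finset.sum_congr rfl e3, e1, e2]
      ring

/-- A family solving the tree Riccati system exists, and any such family is
depth-invariant: `φ^{n,k;m,ℓ} = φ^{n',k';m',ℓ'}` whenever `m − n = m' − n'`. -/
theorem stmt_18 (M : ℕ) (hM : 1 ≤ M) (T ε c p₀ : ℝ) (hT : 0 < T) (hε : 0 < ε)
    (hc : 0 ≤ c) (hp₀ : p₀ ∈ Set.Ico (0:ℝ) 1) :
    (∃ φ : ℕ → ℕ → ℕ → ℕ → ℝ → ℝ, TreeRiccati M T ε c p₀ φ) ∧
    (∀ φ : ℕ → ℕ → ℕ → ℕ → ℝ → ℝ, TreeRiccati M T ε c p₀ φ →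
      ∀ n k m ℓ n' k' m' ℓ', Admissible M n k m ℓ → Admissible M n' k' m' ℓ' →
        m - n = m' - n' → ∀ t ∈ Set.Icc (0:ℝ) T, φ n k m ℓ t = φ n' k' m' ℓ' t) := by
  have h1 : 0 < 1 - p₀ := sub_pos.2 hp₀.2
  obtain ⟨ψ, hψ⟩ := exists_depthRiccati T (ε * (1 - p₀)) (c * (1 - p₀)) (ε * (1 - p₀) / M)
    (-(c * (1 - p₀) / M)) (mul_pos hε h1) (mul_nonneg hc h1.le)
  refine ⟨⟨_, treeRiccati_of_depthRiccati hT hψ⟩, ?_⟩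
  intro φ hφ n k m ℓ n' k' m' ℓ' hA hA' hd t ht
  have hnm : n ≤ m := hA.2.2.2.1
  have hnm' : n' ≤ m' := hA'.2.2.2.1
  obtain ⟨d, rfl⟩ := Nat.exists_eq_add_of_le hnm
  obtain rfl : m' = n' + d := by omega
  rw [hφ.eq_depth hM hψ d n k ℓ hA t ht, hφ.eq_depth hM hψ d n' k' ℓ' hA' t ht]
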